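/- arXiv:1911.06398 — 2 statements merged into one kernel-verified Lean document; each statement's English description precedes it below -/
import Mathlib

section
/- Let G be a twin graph on n vertices with Laplacian matrix L = L(G), and let t = ⌊(n−1)/2⌋ be its number of pairwise disjoint twin pairs. Let I = {i_1,…,i_p} ⊆ {1,…,n} and let B be the n×p matrix whose columns are the standard basis vectors e_{i_1},…,e_{i_p}. If the pair (L, B) is controllable, i.e., the columns of the matrices B, LB, L²B, …, L^{n−1}B together span ℝ^n, then p ≥ t. -/
open Classical Matrix

noncomputable def lap {n : ℕ} (G : SimpleGraph (Fin n)) : Matrix (Fin n) (Fin n) ℝ :=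
  Matrix.of fun i j =>
    (if i = j then ((G.neighborSet i).ncard : ℝ) else 0) - (if G.Adj i j then 1 else 0)

def IsTwin {n : ℕ} (G : SimpleGraph (Fin n)) (u v : Fin n) : Prop :=
  u ≠ v ∧ G.neighborSet u \ {v} = G.neighborSet v \ {u}

def IsEigenvalue {n : ℕ} (M : Matrix (Fin n) (Fin n) ℝ) (μ : ℝ) : Prop :=
  ∃ x : Fin n → ℝ, x ≠ 0 ∧ M.mulVec x = μ • x

def HasSimpleSpectrum {n : ℕ} (M : Matrix (Fin n) (Fin n) ℝ) : Prop :=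
  ∃ μ : Fin n → ℝ, Function.Injective μ ∧ ∀ i, IsEigenvalue M (μ i)

def Controllable {n : ℕ} (M : Matrix (Fin n) (Fin n) ℝ) (b : Fin n → ℝ) : Prop :=
  Submodule.span ℝ (Set.range fun k : Fin n => (M ^ (k : ℕ)).mulVec b) = ⊤

def StronglyUncontrollable {n : ℕ} (G : SimpleGraph (Fin n)) : Prop :=
  G.Connected ∧ HasSimpleSpectrum (lap G) ∧
    ∀ b : Fin n → ℝ, (∀ i, b i = 0 ∨ b i = 1) → ¬ Controllable (lap G) b

def Pmat {n k : ℕ} (c : Fin n → Fin k) : Matrix (Fin n) (Fin k) ℝ :=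
  Matrix.of fun i j => if c i = j then 1 else 0

def IsAEP {n k : ℕ} (G : SimpleGraph (Fin n)) (c : Fin n → Fin k) : Prop :=
  ∀ i j : Fin k, i ≠ j → ∀ x y : Fin n, c x = i → c y = i →
    (G.neighborSet x ∩ {z | c z = j}).ncard = (G.neighborSet y ∩ {z | c z = j}).ncard

noncomputable def quotLap {n k : ℕ} (G : SimpleGraph (Fin n)) (c : Fin n → Fin k) :
    Matrix (Fin k) (Fin k) ℝ :=
  ((Pmat c)ᵀ * Pmat c)⁻¹ * (Pmat c)ᵀ * lap G * Pmat c

def IsQuotAEP {k m : ℕ} (Lq : Matrix (Fin k) (Fin k) ℝ) (r : Fin k → Fin m) : Prop :=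
  ∀ a b : Fin m, a ≠ b → ∀ C C' : Fin k, r C = a → r C' = a →
    ∑ C'' ∈ Finset.univ.filter (fun C'' => r C'' = b), Lq C C'' =
      ∑ C'' ∈ Finset.univ.filter (fun C'' => r C'' = b), Lq C' C''

def IsGraphAut {n : ℕ} (G : SimpleGraph (Fin n)) (σ : Equiv.Perm (Fin n)) : Prop :=
  ∀ x y, G.Adj x y ↔ G.Adj (σ x) (σ y)

def joinOne {n : ℕ} (G : SimpleGraph (Fin n)) : SimpleGraph (Fin (n + 1)) where
  Adj x y := x ≠ y ∧ ((x : ℕ) = n ∨ (y : ℕ) = n ∨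
    ∃ (hx : (x : ℕ) < n) (hy : (y : ℕ) < n), G.Adj ⟨x, hx⟩ ⟨y, hy⟩)
  symm := by
    refine ⟨?_⟩
    rintro x y ⟨hxy, h⟩
    refine ⟨hxy.symm, ?_⟩
    rcases h with h | h | ⟨hx, hy, h⟩
    exacts [Or.inr (Or.inl h), Or.inl h, Or.inr (Or.inr ⟨hy, hx, h.symm⟩)]
  loopless := ⟨fun x h => h.1 rfl⟩

def joinTwo {n : ℕ} (G : SimpleGraph (Fin n)) : SimpleGraph (Fin (n + 2)) where
  Adj x y := x ≠ y ∧ (((x : ℕ) < n ∧ n ≤ (y : ℕ)) ∨ ((y : ℕ) < n ∧ n ≤ (x : ℕ)) ∨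
    ∃ (hx : (x : ℕ) < n) (hy : (y : ℕ) < n), G.Adj ⟨x, hx⟩ ⟨y, hy⟩)
  symm := by
    refine ⟨?_⟩
    rintro x y ⟨hxy, h⟩
    refine ⟨hxy.symm, ?_⟩
    rcases h with h | h | ⟨hx, hy, h⟩
    exacts [Or.inr (Or.inl h), Or.inl h, Or.inr (Or.inr ⟨hy, hx, h.symm⟩)]
  loopless := ⟨fun x h => h.1 rfl⟩

def addPendant {n : ℕ} (G : SimpleGraph (Fin n)) (v : Fin n) : SimpleGraph (Fin (n + 1)) where
  Adj x y := ((x : ℕ) = n ∧ (y : ℕ) = (v : ℕ)) ∨ ((y : ℕ) = n ∧ (x : ℕ) = (v : ℕ)) ∨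
    ∃ (hx : (x : ℕ) < n) (hy : (y : ℕ) < n), G.Adj ⟨x, hx⟩ ⟨y, hy⟩
  symm := by
    refine ⟨?_⟩
    rintro x y (h | h | ⟨hx, hy, h⟩)
    exacts [Or.inr (Or.inl h), Or.inl h, Or.inr (Or.inr ⟨hy, hx, h.symm⟩)]
  loopless := by
    refine ⟨?_⟩
    intro x h
    have hv := v.isLt
    rcases h with ⟨h1, h2⟩ | ⟨h1, h2⟩ | ⟨hx, hy, h⟩
    · omega
    · omega
    · exact G.loopless.irrefl _ h

/-!
If `u` and `v` are twins, then `e_u - e_v` is a left eigenvector of the Laplacian. By the easy half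
of the Popov–Belevitch–Hautus test, a left eigenvector orthogonal to every input is orthogonal to
every reachable state, so controllability forces each twin pair to contain an input vertex.
Disjoint pairs contain different input vertices.
-/

section Controllability

variable {V κ m R : Type*} [Fintype V] [DecidableEq V] [CommSemiring R]
  {A : Matrix V V R} {B : Matrix V m R} {ι : m → V} {φ : V → R} {c : R}

/-- The reachable subspace of the linear system `(A, B)`: the span of the columns of all the
matrices `A ^ k * B`. The pair is controllable when it is the whole space. Over a ring the
powers `k` below the dimension suffice, by Cayley–Hamilton; all of them are allowed here so as not
to fix a dimension. -/
def reachableSubspace (A : Matrix V V R) (B : Matrix V m R) : Submodule R (V → R) :=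
  Submodule.span R (Set.range fun q : ℕ × m => (A ^ q.1 * B).col q.2)

theorem reachableSubspace_eq_top_of_span_eq_top {N : ℕ}
    (h : Submodule.span R {x : V → R | ∃ (k : Fin N) (j : m),
      x = fun i => (A ^ (k : ℕ) * B) i j} = ⊤) :
    reachableSubspace A B = ⊤ := by
  rw [eq_top_iff, ← h]
  refine Submodule.span_mono ?_
  rintro _ ⟨k, j, rfl⟩
  exact ⟨(k, j), rfl⟩

theorem vecMul_pow_of_vecMul_eq_smul (hφ : φ ᵥ* A = c • φ) (k : ℕ) :
    φ ᵥ* A ^ k = c ^ k • φ := by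
  induction k with
  | zero => simp
  | succ k ih => rw [pow_succ, ← vecMul_vecMul, ih, smul_vecMul, hφ, smul_smul, pow_succ]

theorem dotProduct_eq_zero_of_mem_reachableSubspace (hφ : φ ᵥ* A = c • φ) (hB : φ ᵥ* B = 0)
    {x : V → R} (hx : x ∈ reachableSubspace A B) : φ ⬝ᵥ x = 0 := by
  induction hx using Submodule.span_induction with
  | mem x hx =>
    obtain ⟨⟨k, j⟩, rfl⟩ := hx
    have hcol : φ ᵥ* (A ^ k * B) = 0 := by
      rw [← vecMul_vecMul, vecMul_pow_of_vecMul_eq_smul hφ, smul_vecMul, hB, smul_zero]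
    exact congrFun hcol j
  | zero => exact dotProduct_zero φ
  | add x y _ _ hx hy => rw [dotProduct_add, hx, hy, add_zero]
  | smul a x _ hx => rw [dotProduct_smul, hx, smul_zero]

theorem vecMul_ne_zero_of_reachableSubspace_eq_top (hctrl : reachableSubspace A B = ⊤)
    (hφ : φ ᵥ* A = c • φ) (hφ₀ : φ ≠ 0) : φ ᵥ* B ≠ 0 := fun hB =>
  hφ₀ <| dotProduct_eq_zero φ fun _ =>
    dotProduct_eq_zero_of_mem_reachableSubspace hφ hB (hctrl ▸ Submodule.mem_top)

theorem exists_apply_ne_zero_of_reachableSubspace_eq_top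
    (hctrl : reachableSubspace A ((1 : Matrix V V R).submatrix id ι) = ⊤)
    (hφ : φ ᵥ* A = c • φ) (hφ₀ : φ ≠ 0) : ∃ j, φ (ι j) ≠ 0 := by
  obtain ⟨j, hj⟩ :=
    Function.ne_iff.1 (vecMul_ne_zero_of_reachableSubspace_eq_top hctrl hφ hφ₀)
  refine ⟨j, ?_⟩
  simpa [vecMul, dotProduct, one_apply] using hj

theorem card_le_card_of_reachableSubspace_eq_top [Fintype κ] [Fintype m]
    (hctrl : reachableSubspace A ((1 : Matrix V V R).submatrix id ι) = ⊤)
    {ψ : κ → V → R} {μ : κ → R} (hψ : ∀ i, ψ i ᵥ* A = μ i • ψ i) (hψ₀ : ∀ i, ψ i ≠ 0)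
    (hdisj : Pairwise fun i j => Disjoint (Function.support (ψ i)) (Function.support (ψ j))) :
    Fintype.card κ ≤ Fintype.card m := by
  choose f hf using fun i =>
    exists_apply_ne_zero_of_reachableSubspace_eq_top hctrl (hψ i) (hψ₀ i)
  refine Fintype.card_le_of_injective f fun i j hij => ?_
  by_contra hne
  exact Set.disjoint_left.1 (hdisj hne) (hf i) (hij ▸ hf j)

end Controllability

theorem lapMatrix_apply {V R : Type*} [Fintype V] [DecidableEq V] [AddGroupWithOne R]
    (G : SimpleGraph V) [DecidableRel G.Adj] (u v : V) :
    G.lapMatrix R u v =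
      (if u = v then (G.degree u : R) else 0) - if G.Adj u v then 1 else 0 := by
  simp [SimpleGraph.lapMatrix, SimpleGraph.degMatrix, diagonal_apply]

theorem lap_eq_lapMatrix {n : ℕ} (G : SimpleGraph (Fin n)) : lap G = G.lapMatrix ℝ := by
  ext i j
  rw [lapMatrix_apply, ← G.card_neighborSet_eq_degree, ← Nat.card_eq_fintype_card]
  rfl

section Single

variable {V R : Type*} [DecidableEq V] [AddGroup R] {u v : V} {a b : R}

theorem support_single_sub_single_subset :
    Function.support (Pi.single u a - Pi.single v b : V → R) ⊆ {u, v} :=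
  (Function.support_sub _ _).trans <|
    Set.union_subset_union Pi.support_single_subset Pi.support_single_subset

theorem single_sub_single_ne_zero (huv : u ≠ v) (ha : a ≠ 0) :
    (Pi.single u a - Pi.single v b : V → R) ≠ 0 := fun h => ha <| by
  simpa [huv] using congrFun h u

end Single

section Twins

variable {V : Type*} {G : SimpleGraph V} {u v w : V}

/-- Two distinct vertices are twins if they have the same neighbors apart from each other, so that
both adjacent and non-adjacent twins are covered. This is `IsTwin` on an arbitrary vertex type. -/
def AreTwins (G : SimpleGraph V) (u v : V) : Prop :=
  u ≠ v ∧ G.neighborSet u \ {v} = G.neighborSet v \ {u}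

namespace AreTwins

theorem adj_iff (h : AreTwins G u v) (hu : w ≠ u) (hv : w ≠ v) : G.Adj u w ↔ G.Adj v w := by
  simpa [hu, hv] using Set.ext_iff.1 h.2 w

theorem degree_eq [Fintype (G.neighborSet u)] [Fintype (G.neighborSet v)]
    (h : AreTwins G u v) : G.degree u = G.degree v := by
  classical
  have herase : (G.neighborFinset u).erase v = (G.neighborFinset v).erase u := by
    simpa [← Finset.coe_inj] using h.2
  have hcard := congrArg Finset.card herase
  by_cases huv : G.Adj u v
  · have hu := Finset.card_erase_add_one ((G.mem_neighborFinset u v).2 huv)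
    have hv := Finset.card_erase_add_one ((G.mem_neighborFinset v u).2 huv.symm)
    rw [← G.card_neighborFinset_eq_degree, ← G.card_neighborFinset_eq_degree, ← hu, ← hv, hcard]
  · rwa [Finset.erase_eq_of_notMem (by simpa using huv),
      Finset.erase_eq_of_notMem (by simpa [G.adj_comm] using huv)] at hcard

theorem vecMul_lapMatrix [Fintype V] [DecidableEq V] [DecidableRel G.Adj] {R : Type*} [CommRing R]
    (h : AreTwins G u v) :
    (Pi.single u 1 - Pi.single v 1) ᵥ* G.lapMatrix R =
      ((G.degree u : R) + if G.Adj u v then 1 else 0) • (Pi.single u 1 - Pi.single v 1) := by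
  ext w
  rw [sub_vecMul, single_one_vecMul, single_one_vecMul]
  by_cases hu : w = u
  · subst hu
    simp [lapMatrix_apply, h.1, h.1.symm, G.adj_comm v w]
  by_cases hv : w = v
  · subst hv
    simp [lapMatrix_apply, h.1, h.1.symm, h.degree_eq, neg_add_eq_sub, add_comm]
  · simp [lapMatrix_apply, hu, hv, Ne.symm hu, Ne.symm hv, h.adj_iff hu hv]

end AreTwins

end Twins

theorem stmt3_general {V κ m R : Type*} [Fintype V] [DecidableEq V] [Fintype κ] [Fintype m]
    [CommRing R] [Nontrivial R] (G : SimpleGraph V) [DecidableRel G.Adj] (u v : κ → V)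
    (htwin : ∀ i, AreTwins G (u i) (v i))
    (hdisj : Pairwise fun i j => Disjoint ({u i, v i} : Set V) {u j, v j}) (ι : m → V)
    (hctrl : reachableSubspace (G.lapMatrix R) ((1 : Matrix V V R).submatrix id ι) = ⊤) :
    Fintype.card κ ≤ Fintype.card m :=
  card_le_card_of_reachableSubspace_eq_top hctrl (fun i => (htwin i).vecMul_lapMatrix)
    (fun i => single_sub_single_ne_zero (htwin i).1 one_ne_zero)
    fun _ _ hij => (hdisj hij).mono support_single_sub_single_subset
      support_single_sub_single_subset

theorem stmt3 {n t p : ℕ} (ht : t = (n - 1) / 2)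
    (G : SimpleGraph (Fin n)) (hspec : HasSimpleSpectrum (lap G))
    (u v : Fin t → Fin n) (htwin : ∀ i, IsTwin G (u i) (v i))
    (hdisj : ∀ i j, i ≠ j → ({u i, v i} : Set (Fin n)) ∩ {u j, v j} = ∅)
    (ι : Fin p → Fin n) (hι : Function.Injective ι)
    (B : Matrix (Fin n) (Fin p) ℝ)
    (hB : B = Matrix.of fun i j => if i = ι j then 1 else 0)
    (hctrl : Submodule.span ℝ {x : Fin n → ℝ | ∃ (k : Fin n) (j : Fin p),
        x = fun i => ((lap G ^ (k : ℕ)) * B) i j} = ⊤) :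
    t ≤ p := by
  have hreach : reachableSubspace (G.lapMatrix ℝ) B = ⊤ :=
    lap_eq_lapMatrix G ▸ reachableSubspace_eq_top_of_span_eq_top hctrl
  simpa using stmt3_general G u v htwin
    (fun i j hij => Set.disjoint_iff_inter_eq_empty.2 (hdisj i j hij)) ι
    (hB ▸ hreach :)
end

section
/- Let G be a strongly uncontrollable graph on vertex set {1,…,n} in which vertex n has degree n − 1, and let G̃ be the graph on {1,…,n+1} obtained from G by adding the new vertex n+1 adjacent only to vertex n. Then G̃ is strongly uncontrollable if and only if 1 is not an eigenvalue of L(G). -/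
open Classical Matrix

/-!
Write `e` for the indicator vector of the universal vertex `v`, and `1` for the all-ones vector.
Since `L(G) e = n e - 1`, the vectors `1` and `1 - n e` are eigenvectors of `L(G)` for `0` and `n`,
and every other eigenvector vanishes at `v`. Extending such an eigenvector by zero at the pendant
vertex gives an eigenvector of `L(G̃)` for the same eigenvalue. The three remaining eigenvalues of
`L(G̃)` are `0`, `1` and `n + 1`, with `(1 - e, 1 - n)` an eigenvector for the eigenvalue `1`. As
`n` bounds the spectrum of `L(G)`, the spectrum of `L(G̃)` is simple exactly when `1` was not
already an eigenvalue of `L(G)`.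

By the Popov–Belevitch–Hautus test, `(L, b)` is uncontrollable iff an eigenvector of `L` is
orthogonal to `b`. A binary vector orthogonal to `1` or to `1 - n e` is constant. Changing a binary
vector at `v` alone can make it nonconstant, so some eigenvector of `L(G)` vanishing at `v` is
orthogonal to it, and hence to the original vector; its extension by zero settles `G̃`.
-/

open Module Polynomial

section Controllability

lemma vecMul_pow_of_vecMul_eq_smul_s10 {R ι : Type*} [CommSemiring R] [Fintype ι] [DecidableEq ι]
    {M : Matrix ι ι R} {x : ι → R} {a : R} (hx : x ᵥ* M = a • x) (k : ℕ) :
    x ᵥ* M ^ k = a ^ k • x := by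
  induction k with
  | zero => simp
  | succ k ih => rw [pow_succ, ← vecMul_vecMul, ih, smul_vecMul, hx, smul_smul, ← pow_succ]

variable {n : ℕ} {M : Matrix (Fin n) (Fin n) ℝ} {b : Fin n → ℝ}

theorem not_controllable_of_dotProduct_eq_zero {x : Fin n → ℝ} {a : ℝ} (hx0 : x ≠ 0)
    (hx : x ᵥ* M = a • x) (hxb : x ⬝ᵥ b = 0) : ¬ Controllable M b := by
  intro hctrl
  have hspan : Submodule.span ℝ (Set.range fun k : Fin n => (M ^ (k : ℕ)) *ᵥ b) ≤
      LinearMap.ker (dotProductBilin ℝ ℝ x) := by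
    rw [Submodule.span_le]
    rintro _ ⟨k, rfl⟩
    change x ⬝ᵥ (M ^ (k : ℕ)) *ᵥ b = 0
    rw [dotProduct_mulVec, vecMul_pow_of_vecMul_eq_smul_s10 hx, smul_dotProduct, hxb, smul_zero]
  rw [hctrl] at hspan
  exact hx0 (dotProduct_eq_zero x fun y => hspan (Submodule.mem_top (x := y)))

-- The matrix of left eigenvectors times the Kalman matrix is diagonal times Vandermonde.
theorem exists_dotProduct_eq_zero_of_not_controllable {μ : Fin n → ℝ} (hμ : Function.Injective μ)
    {x : Fin n → Fin n → ℝ} (hx : ∀ i, x i ᵥ* M = μ i • x i) (hb : ¬ Controllable M b) :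
    ∃ i, x i ⬝ᵥ b = 0 := by
  by_contra! hxb
  refine hb ?_
  set K : Matrix (Fin n) (Fin n) ℝ := Matrix.of fun k => (M ^ (k : ℕ)) *ᵥ b
  have hfactor : Matrix.of x * Kᵀ = diagonal (fun i => x i ⬝ᵥ b) * vandermonde μ := by
    ext i k
    calc (Matrix.of x * Kᵀ) i k = x i ⬝ᵥ (M ^ (k : ℕ)) *ᵥ b := rfl
      _ = (x i ⬝ᵥ b) * μ i ^ (k : ℕ) := by
        rw [dotProduct_mulVec, vecMul_pow_of_vecMul_eq_smul_s10 (hx i), smul_dotProduct, smul_eq_mul,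
          mul_comm]
      _ = (diagonal (fun i => x i ⬝ᵥ b) * vandermonde μ) i k := by
        rw [diagonal_mul, vandermonde_apply]
  have hdet : (Matrix.of x).det * K.det ≠ 0 := by
    rw [← det_transpose K, ← det_mul, hfactor, det_mul, det_diagonal]
    exact mul_ne_zero (Finset.prod_ne_zero_iff.2 fun i _ => hxb i)
      (det_vandermonde_ne_zero_iff.2 hμ)
  have hindep : LinearIndependent ℝ K.row :=
    linearIndependent_rows_of_det_ne_zero (right_ne_zero_of_mul hdet)
  exact hindep.span_eq_top_of_card_eq_finrank' (by simp)

end Controllability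

section SimpleSpectrum

lemma finrank_eigenspace_le_one {K V ι : Type*} [Field K] [AddCommGroup V] [Module K V]
    [FiniteDimensional K V] [Fintype ι] {f : End K V} {μ : ι → K} (hμ : Function.Injective μ)
    (hf : ∀ i, f.HasEigenvalue (μ i)) (hcard : Fintype.card ι = finrank K V) (a : K) :
    finrank K (f.eigenspace a) ≤ 1 := by
  have hle : (Finset.univ.map ⟨μ, hμ⟩).val ≤ f.charpoly.roots := by
    rw [Finset.val_le_iff_val_subset]
    intro c hc
    obtain ⟨i, -, rfl⟩ := Finset.mem_map.1 hc
    rw [mem_roots f.charpoly_monic.ne_zero]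
    exact (f.hasEigenvalue_iff_isRoot_charpoly _).1 (hf i)
  have hroots : (Finset.univ.map ⟨μ, hμ⟩).val = f.charpoly.roots := by
    refine Multiset.eq_of_le_of_card_le hle ?_
    calc f.charpoly.roots.card ≤ f.charpoly.natDegree := card_roots' _
      _ = (Finset.univ.map ⟨μ, hμ⟩).card := by
        rw [f.charpoly_natDegree, ← hcard, Finset.card_map, Finset.card_univ]
  calc finrank K (f.eigenspace a) ≤ f.charpoly.rootMultiplicity a := f.finrank_eigenspace_le a
    _ = (Finset.univ.map ⟨μ, hμ⟩).val.count a := by rw [hroots, count_roots]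
    _ ≤ 1 := Multiset.nodup_iff_count_le_one.1 (Finset.nodup _) a

variable {n : ℕ} {M : Matrix (Fin n) (Fin n) ℝ}

lemma IsEigenvalue.hasEigenvalue {a : ℝ} (h : IsEigenvalue M a) :
    End.HasEigenvalue (toLin' M) a := by
  obtain ⟨x, hx0, hx⟩ := h
  exact End.hasEigenvalue_of_hasEigenvector
    ⟨End.mem_eigenspace_iff.2 ((toLin'_apply M x).trans hx), hx0⟩

lemma HasSimpleSpectrum.exists_eq_smul (hM : HasSimpleSpectrum M) {a : ℝ} {x y : Fin n → ℝ}
    (hx0 : x ≠ 0) (hx : M *ᵥ x = a • x) (hy : M *ᵥ y = a • y) : ∃ c : ℝ, y = c • x := by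
  obtain ⟨μ, hμ, hev⟩ := hM
  have hdim : finrank ℝ (End.eigenspace (toLin' M) a) ≤ 1 :=
    finrank_eigenspace_le_one hμ (fun i => (hev i).hasEigenvalue) (by simp) a
  obtain ⟨u, hu⟩ := finrank_le_one_iff.1 hdim
  have hspan {z : Fin n → ℝ} (hz : M *ᵥ z = a • z) : ∃ c : ℝ, c • u.1 = z := by
    obtain ⟨c, hc⟩ := hu ⟨z, by rwa [End.mem_eigenspace_iff, toLin'_apply]⟩
    exact ⟨c, congrArg Subtype.val hc⟩
  obtain ⟨c, rfl⟩ := hspan hx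
  obtain ⟨d, rfl⟩ := hspan hy
  have hc : c ≠ 0 := fun h => hx0 (by rw [h, zero_smul])
  exact ⟨d / c, by rw [smul_smul, div_mul_cancel₀ d hc]⟩

lemma HasSimpleSpectrum.exists_eigenvector_dotProduct_eq_zero (hM : HasSimpleSpectrum M)
    (hsymm : M.IsSymm) {b : Fin n → ℝ} (hb : ¬ Controllable M b) :
    ∃ (a : ℝ) (x : Fin n → ℝ), x ≠ 0 ∧ M *ᵥ x = a • x ∧ x ⬝ᵥ b = 0 := by
  obtain ⟨μ, hμ, hev⟩ := hM
  choose x hx0 hx using hev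
  have hleft (i) : x i ᵥ* M = μ i • x i := by rw [← mulVec_transpose, hsymm.eq, hx]
  obtain ⟨i, hi⟩ := exists_dotProduct_eq_zero_of_not_controllable hμ hleft hb
  exact ⟨μ i, x i, hx0 i, hx i, hi⟩

end SimpleSpectrum

section Laplacian

lemma ncard_neighborSet_eq_degree {V : Type*} (G : SimpleGraph V) (v : V)
    [Fintype (G.neighborSet v)] : (G.neighborSet v).ncard = G.degree v :=
  Set.ncard_eq_toFinset_card' _

variable {n : ℕ} (G : SimpleGraph (Fin n))

lemma lap_eq_lapMatrix_s10 [DecidableRel G.Adj] : lap G = G.lapMatrix ℝ := by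
  ext i j
  simp [lap, SimpleGraph.lapMatrix, SimpleGraph.degMatrix, diagonal_apply,
    ncard_neighborSet_eq_degree, SimpleGraph.adjMatrix_apply]

lemma lap_isSymm : (lap G).IsSymm :=
  lap_eq_lapMatrix_s10 G ▸ G.isSymm_lapMatrix ℝ

lemma lap_mulVec_apply [DecidableRel G.Adj] (x : Fin n → ℝ) (i : Fin n) :
    (lap G *ᵥ x) i = ∑ j, if G.Adj i j then x i - x j else 0 := by
  rw [lap_eq_lapMatrix_s10, SimpleGraph.lapMatrix_mulVec_apply, SimpleGraph.degree_eq_sum_if_adj,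
    Finset.sum_mul, G.neighborFinset_eq_filter, Finset.sum_filter, ← Finset.sum_sub_distrib]
  exact Finset.sum_congr rfl fun j _ => by split_ifs <;> simp

lemma lap_mulVec_one : lap G *ᵥ 1 = 0 := by
  rw [lap_eq_lapMatrix_s10]
  exact G.lapMatrix_mulVec_const_eq_zero

lemma isEigenvalue_lap_zero [NeZero n] : IsEigenvalue (lap G) 0 :=
  ⟨1, one_ne_zero, by rw [lap_mulVec_one, zero_smul]⟩

lemma lap_mulVec_add_lap_compl_mulVec (x : Fin n → ℝ) :
    lap G *ᵥ x + lap Gᶜ *ᵥ x = (n : ℝ) • x - (∑ j, x j) • 1 := by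
  ext i
  have hterm (j) : ((if G.Adj i j then x i - x j else 0) + if Gᶜ.Adj i j then x i - x j else 0) =
      x i - x j := by
    by_cases hij : i = j
    · simp [hij]
    · by_cases h : G.Adj i j <;> simp [h, hij]
  rw [Pi.add_apply, lap_mulVec_apply, lap_mulVec_apply, ← Finset.sum_add_distrib,
    Finset.sum_congr rfl fun j _ => hterm j]
  simp

variable {G} {a : ℝ} {x : Fin n → ℝ}

lemma sum_eq_zero_of_lap_mulVec_eq_smul (hx : lap G *ᵥ x = a • x) (ha : a ≠ 0) :
    ∑ i, x i = 0 := by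
  have h : a * ∑ i, x i = 0 := by
    calc
      a * ∑ i, x i = 1 ⬝ᵥ lap G *ᵥ x := by rw [hx, dotProduct_smul, one_dotProduct, smul_eq_mul]
      _ = (lap G *ᵥ 1) ⬝ᵥ x := by rw [dotProduct_mulVec, ← mulVec_transpose, (lap_isSymm G).eq]
      _ = 0 := by rw [lap_mulVec_one, zero_dotProduct]
  exact (mul_eq_zero.1 h).resolve_left ha

-- On vectors of sum zero the Laplacian of the complement acts as `n - L(G)`, and it is positive
-- semidefinite.
lemma IsEigenvalue.le_of_lap (h : IsEigenvalue (lap G) a) : a ≤ n := by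
  obtain ⟨x, hx0, hx⟩ := h
  by_cases ha : a = 0
  · exact ha ▸ n.cast_nonneg
  have hcompl : lap Gᶜ *ᵥ x = ((n : ℝ) - a) • x := by
    have h := lap_mulVec_add_lap_compl_mulVec G x
    rw [hx, sum_eq_zero_of_lap_mulVec_eq_smul hx ha, zero_smul, sub_zero] at h
    rw [sub_smul, ← h, add_sub_cancel_left]
  have hquad : 0 ≤ ((n : ℝ) - a) * (x ⬝ᵥ x) := by
    have h := (Gᶜ.posSemidef_lapMatrix ℝ).dotProduct_mulVec_nonneg x
    rwa [← lap_eq_lapMatrix_s10, hcompl, star_trivial, dotProduct_smul, smul_eq_mul] at h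
  have hpos : 0 < x ⬝ᵥ x := by simpa using dotProduct_star_self_pos_iff.2 hx0
  exact sub_nonneg.1 (nonneg_of_mul_nonneg_left hquad hpos)

end Laplacian

section UniversalVertex

lemma eq_of_sum_eq_card_nsmul {ι R : Type*} [Fintype ι] [AddCommMonoid R] [PartialOrder R]
    [IsOrderedCancelAddMonoid R] {b : ι → R} {i : ι} (hi : (∀ j, b i ≤ b j) ∨ ∀ j, b j ≤ b i)
    (hsum : ∑ j, b j = Fintype.card ι • b i) (j : ι) : b j = b i := by
  have hsum' : ∑ j, b j = ∑ _j : ι, b i := by rw [hsum, Finset.sum_const, Finset.card_univ]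
  rcases hi with hmin | hmax
  · exact ((Finset.sum_eq_sum_iff_of_le fun j _ => hmin j).1 hsum'.symm j (Finset.mem_univ j)).symm
  · exact (Finset.sum_eq_sum_iff_of_le fun j _ => hmax j).1 hsum' j (Finset.mem_univ j)

lemma isUniversal_of_ncard_neighborSet_eq {V : Type*} [Finite V] {G : SimpleGraph V} {v : V}
    (h : (G.neighborSet v).ncard = Nat.card V - 1) : G.IsUniversal v := by
  have := Fintype.ofFinite V
  rw [← G.degree_eq_card_sub_one, ← Nat.card_eq_fintype_card, ← h,
    ncard_neighborSet_eq_degree]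

variable {n : ℕ} {G : SimpleGraph (Fin n)} {v : Fin n} (hv : G.IsUniversal v)
include hv

lemma lap_mulVec_apply_of_isUniversal (x : Fin n → ℝ) :
    (lap G *ᵥ x) v = n * x v - ∑ i, x i := by
  have hterm (j) : (if G.Adj v j then x v - x j else 0) = x v - x j := by
    by_cases h : v = j
    · simp [h]
    · rw [if_pos (hv h)]
  simp [lap_mulVec_apply, hterm]

lemma lap_mulVec_single_of_isUniversal :
    lap G *ᵥ Pi.single v 1 = (n : ℝ) • Pi.single v 1 - 1 := by
  ext i
  by_cases hi : v = i
  · subst hi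
    simp [lap_mulVec_apply_of_isUniversal hv]
  · rw [lap_mulVec_apply, Finset.sum_eq_single v]
    · simp [Ne.symm hi, (hv hi).symm]
    · intro j _ hj
      simp [Ne.symm hi, hj]
    · simp

lemma lap_mulVec_one_sub_smul_single (c : ℝ) :
    lap G *ᵥ (1 - c • Pi.single v 1) = c • (1 - (n : ℝ) • Pi.single v 1) := by
  rw [mulVec_sub, mulVec_smul, lap_mulVec_one, lap_mulVec_single_of_isUniversal hv, zero_sub,
    ← smul_neg, neg_sub]

lemma isEigenvalue_lap_card [Nontrivial (Fin n)] : IsEigenvalue (lap G) n := by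
  obtain ⟨w, hw⟩ := exists_ne v
  exact ⟨1 - (n : ℝ) • Pi.single v 1, fun h => by simpa [hw] using congrFun h w,
    lap_mulVec_one_sub_smul_single hv n⟩

lemma apply_eq_zero_of_lap_mulVec_eq_smul {a : ℝ} {x : Fin n → ℝ} (hx : lap G *ᵥ x = a • x)
    (ha0 : a ≠ 0) (han : a ≠ n) : x v = 0 := by
  have h := lap_mulVec_apply_of_isUniversal hv x
  rw [hx, sum_eq_zero_of_lap_mulVec_eq_smul hx ha0, sub_zero, Pi.smul_apply, smul_eq_mul] at h
  by_contra hxv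
  exact han (mul_right_cancel₀ hxv h)

lemma apply_eq_zero_of_dotProduct_binary_eq_zero (hs : HasSimpleSpectrum (lap G)) {a : ℝ}
    {x b : Fin n → ℝ} (hx0 : x ≠ 0) (hx : lap G *ᵥ x = a • x) (hb : ∀ i, b i = 0 ∨ b i = 1)
    {w : Fin n} (hbw : b w ≠ b v) (hxb : x ⬝ᵥ b = 0) : x v = 0 := by
  have horth {y : Fin n → ℝ} (hy : lap G *ᵥ y = a • y) : y ⬝ᵥ b = 0 := by
    obtain ⟨c, rfl⟩ := hs.exists_eq_smul hx0 hx hy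
    rw [smul_dotProduct, hxb, smul_zero]
  have hnonneg (i) : 0 ≤ b i := by rcases hb i with h | h <;> simp [h]
  have hle_one (i) : b i ≤ 1 := by rcases hb i with h | h <;> simp [h]
  refine apply_eq_zero_of_lap_mulVec_eq_smul hv hx ?_ ?_
  · rintro rfl
    have hsum : ∑ i, b i = 0 := by
      simpa [one_dotProduct] using horth (y := 1) (by rw [lap_mulVec_one, zero_smul])
    have hzero (i) : b i = 0 :=
      (Finset.sum_eq_zero_iff_of_nonneg fun i _ => hnonneg i).1 hsum i (Finset.mem_univ i)
    exact hbw ((hzero w).trans (hzero v).symm)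
  · rintro rfl
    have hsum : ∑ i, b i = n * b v := by
      simpa [sub_dotProduct, one_dotProduct, sub_eq_zero] using
        horth (lap_mulVec_one_sub_smul_single hv n)
    have hext : (∀ j, b v ≤ b j) ∨ ∀ j, b j ≤ b v :=
      (hb v).imp (fun h => by rwa [h]) (fun h => by rwa [h])
    exact hbw (eq_of_sum_eq_card_nsmul hext (by rwa [Fintype.card_fin, nsmul_eq_mul]) w)

end UniversalVertex

namespace StronglyUncontrollable

variable {n : ℕ} {G : SimpleGraph (Fin n)}

lemma nontrivial (hG : StronglyUncontrollable G) : Nontrivial (Fin n) := by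
  obtain ⟨hconn, hs, hunc⟩ := hG
  obtain ⟨i⟩ := hconn.nonempty
  by_contra htriv
  have := not_nontrivial_iff_subsingleton.1 htriv
  obtain ⟨a, x, hx0, -, hx1⟩ :=
    hs.exists_eigenvector_dotProduct_eq_zero (lap_isSymm G) (hunc 1 fun _ => Or.inr rfl)
  rw [dotProduct_one, Fintype.sum_subsingleton x i] at hx1
  exact hx0 (funext fun j => Subsingleton.elim i j ▸ hx1)

lemma exists_eigenvector_apply_eq_zero (hG : StronglyUncontrollable G) {v : Fin n}
    (hv : G.IsUniversal v) {b : Fin n → ℝ} (hb : ∀ i, b i = 0 ∨ b i = 1) :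
    ∃ (a : ℝ) (x : Fin n → ℝ), x ≠ 0 ∧ lap G *ᵥ x = a • x ∧ x v = 0 ∧ x ⬝ᵥ b = 0 := by
  have := hG.nontrivial
  obtain ⟨-, hs, hunc⟩ := hG
  obtain ⟨w, hw⟩ := exists_ne v
  set b' : Fin n → ℝ := Function.update b v (1 - b w)
  have hb'v : b' v = 1 - b w := Function.update_self ..
  have hb' (i) (hi : i ≠ v) : b' i = b i := Function.update_of_ne hi ..
  have hbin (i) : b' i = 0 ∨ b' i = 1 := by
    by_cases hi : i = v
    · rw [hi, hb'v]
      rcases hb w with h | h <;> simp [h]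
    · rw [hb' i hi]
      exact hb i
  have hbw : b' w ≠ b' v := by
    rw [hb' w hw, hb'v]
    rcases hb w with h | h <;> simp [h]
  obtain ⟨a, x, hx0, hx, hxb'⟩ :=
    hs.exists_eigenvector_dotProduct_eq_zero (lap_isSymm G) (hunc b' hbin)
  have hxv := apply_eq_zero_of_dotProduct_binary_eq_zero hv hs hx0 hx hbin hbw hxb'
  refine ⟨a, x, hx0, hx, hxv, ?_⟩
  rw [← hxb']
  refine Finset.sum_congr rfl fun i _ => ?_
  by_cases hi : i = v
  · simp [hi, hxv]
  · rw [hb' i hi]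

end StronglyUncontrollable

section AddPendant

lemma snoc_ne_zero {α : Type*} [Zero α] {n : ℕ} {x : Fin n → α} (hx : x ≠ 0) (c : α) :
    (Fin.snoc x c : Fin (n + 1) → α) ≠ 0 :=
  fun h => hx (funext fun i => by simpa using congrFun h i.castSucc)

lemma smul_snoc {R α : Type*} [SMul R α] {n : ℕ} (a : R) (x : Fin n → α) (c : α) :
    a • (Fin.snoc x c : Fin (n + 1) → α) = Fin.snoc (a • x) (a • c) := by
  ext i
  cases i using Fin.lastCases <;> simp

variable {n : ℕ} {G : SimpleGraph (Fin n)} {v : Fin n}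

lemma addPendant_adj_castSucc_castSucc {i j : Fin n} :
    (addPendant G v).Adj i.castSucc j.castSucc ↔ G.Adj i j := by
  simp [addPendant, i.isLt.ne, j.isLt.ne]

lemma addPendant_adj_castSucc_last {i : Fin n} :
    (addPendant G v).Adj i.castSucc (Fin.last n) ↔ i = v := by
  simp [addPendant, i.isLt.ne, Fin.ext_iff]

lemma isUniversal_addPendant (hv : G.IsUniversal v) : (addPendant G v).IsUniversal v.castSucc := by
  intro w hw
  cases w using Fin.lastCases with
  | last => exact addPendant_adj_castSucc_last.2 rfl
  | cast w => exact addPendant_adj_castSucc_castSucc.2 (hv (ne_of_apply_ne _ hw))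

variable (G v) in
lemma lap_addPendant_mulVec_snoc (x : Fin n → ℝ) (c : ℝ) :
    lap (addPendant G v) *ᵥ (Fin.snoc x c : Fin (n + 1) → ℝ) =
      Fin.snoc (lap G *ᵥ x + (x v - c) • Pi.single v 1) (c - x v) := by
  ext i
  rw [lap_mulVec_apply, Fin.sum_univ_castSucc]
  cases i using Fin.lastCases with
  | last => simp [(addPendant G v).adj_comm (Fin.last n), addPendant_adj_castSucc_last]
  | cast i =>
    by_cases hi : i = v <;>
      simp [addPendant_adj_castSucc_castSucc, addPendant_adj_castSucc_last, lap_mulVec_apply, hi]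

lemma lap_addPendant_mulVec_snoc_zero {a : ℝ} {x : Fin n → ℝ} (hx : lap G *ᵥ x = a • x)
    (hxv : x v = 0) :
    lap (addPendant G v) *ᵥ (Fin.snoc x 0 : Fin (n + 1) → ℝ) =
      a • (Fin.snoc x 0 : Fin (n + 1) → ℝ) := by
  rw [lap_addPendant_mulVec_snoc, hx, hxv, sub_zero, zero_smul, add_zero, smul_snoc, smul_zero]

lemma lap_addPendant_mulVec_one_sub_single (hv : G.IsUniversal v) :
    lap (addPendant G v) *ᵥ (Fin.snoc (1 - Pi.single v 1) (1 - n) : Fin (n + 1) → ℝ) =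
      (1 : ℝ) • (Fin.snoc (1 - Pi.single v 1) (1 - n) : Fin (n + 1) → ℝ) := by
  have hL : lap G *ᵥ (1 - Pi.single v 1) = 1 - (n : ℝ) • Pi.single v 1 := by
    simpa using lap_mulVec_one_sub_smul_single hv 1
  rw [lap_addPendant_mulVec_snoc, hL, one_smul]
  congr 1
  · simp only [Pi.sub_apply, Pi.one_apply, Pi.single_eq_same]
    module
  · simp

end AddPendant

section Spectrum

variable {n : ℕ} {G : SimpleGraph (Fin n)} {v : Fin n} (hv : G.IsUniversal v)
include hv

lemma isEigenvalue_lap_addPendant_one [Nontrivial (Fin n)] :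
    IsEigenvalue (lap (addPendant G v)) 1 := by
  obtain ⟨w, hw⟩ := exists_ne v
  refine ⟨_, snoc_ne_zero (fun h => ?_) _, lap_addPendant_mulVec_one_sub_single hv⟩
  simpa [hw] using congrFun h w

lemma IsEigenvalue.lap_addPendant {a : ℝ} (h : IsEigenvalue (lap G) a) (han : a ≠ n) :
    IsEigenvalue (lap (addPendant G v)) a := by
  by_cases ha0 : a = 0
  · exact ha0 ▸ isEigenvalue_lap_zero _
  obtain ⟨x, hx0, hx⟩ := h
  have hxv : x v = 0 := apply_eq_zero_of_lap_mulVec_eq_smul hv hx ha0 han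
  exact ⟨_, snoc_ne_zero hx0 0, lap_addPendant_mulVec_snoc_zero hx hxv⟩

lemma hasSimpleSpectrum_lap_addPendant [Nontrivial (Fin n)] (hs : HasSimpleSpectrum (lap G))
    (h1 : ¬ IsEigenvalue (lap G) 1) : HasSimpleSpectrum (lap (addPendant G v)) := by
  obtain ⟨μ, hμ, hev⟩ := hs
  have hle (i) : μ i ≤ n := (hev i).le_of_lap
  have hne_one (i) : μ i ≠ 1 := fun h => h1 (h ▸ hev i)
  set ν : Fin n → ℝ := fun i => if μ i = n then n + 1 else μ i
  have hν : Function.Injective ν := by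
    intro i j hij
    apply hμ
    grind [hle i, hle j]
  have hν_one : (1 : ℝ) ∉ Set.range ν := by
    rintro ⟨i, hi⟩
    have hn : (n : ℝ) ≠ 0 := Nat.cast_ne_zero.2 v.pos.ne'
    grind [hne_one i]
  refine ⟨Fin.snoc ν 1, Fin.snoc_injective_iff.2 ⟨hν, hν_one⟩, fun i => ?_⟩
  cases i using Fin.lastCases with
  | last => simpa using isEigenvalue_lap_addPendant_one hv
  | cast i =>
    rw [Fin.snoc_castSucc]
    by_cases hi : μ i = n
    · have := Fin.nontrivial_iff_two_le.2 (Nat.succ_le_succ v.pos)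
      simpa [ν, hi] using isEigenvalue_lap_card (isUniversal_addPendant hv)
    · simpa [ν, hi] using (hev i).lap_addPendant hv hi

lemma not_isEigenvalue_one_of_hasSimpleSpectrum_addPendant [Nontrivial (Fin n)]
    (hs : HasSimpleSpectrum (lap (addPendant G v))) : ¬ IsEigenvalue (lap G) 1 := by
  rintro ⟨x, hx0, hx⟩
  have hn : (1 : ℝ) ≠ n := by
    have := Fin.nontrivial_iff_two_le.1 ‹Nontrivial (Fin n)›
    exact_mod_cast (by omega : 1 ≠ n)
  have hxv : x v = 0 := apply_eq_zero_of_lap_mulVec_eq_smul hv hx one_ne_zero hn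
  obtain ⟨c, hc⟩ := hs.exists_eq_smul (snoc_ne_zero hx0 0)
    (lap_addPendant_mulVec_snoc_zero hx hxv) (lap_addPendant_mulVec_one_sub_single hv)
  have hlast : (1 : ℝ) - n = 0 := by simpa using congrFun hc (Fin.last n)
  exact hn (sub_eq_zero.1 hlast)

end Spectrum

lemma StronglyUncontrollable.not_controllable_addPendant {n : ℕ} {G : SimpleGraph (Fin n)}
    (hG : StronglyUncontrollable G) {v : Fin n} (hv : G.IsUniversal v) {b : Fin (n + 1) → ℝ}
    (hb : ∀ i, b i = 0 ∨ b i = 1) : ¬ Controllable (lap (addPendant G v)) b := by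
  obtain ⟨a, x, hx0, hx, hxv, hxb⟩ :=
    hG.exists_eigenvector_apply_eq_zero hv (b := Fin.init b) fun i => hb i.castSucc
  refine not_controllable_of_dotProduct_eq_zero (a := a) (snoc_ne_zero hx0 0) ?_ ?_
  · rw [← mulVec_transpose, (lap_isSymm _).eq, lap_addPendant_mulVec_snoc_zero hx hxv]
  · simpa [dotProduct, Fin.sum_univ_castSucc, Fin.init] using hxb

theorem stmt10_general {n : ℕ} {G : SimpleGraph (Fin n)} {v : Fin n} (hv : G.IsUniversal v)
    (hG : StronglyUncontrollable G) :
    StronglyUncontrollable (addPendant G v) ↔ ¬ IsEigenvalue (lap G) 1 := by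
  have := hG.nontrivial
  refine ⟨fun ⟨_, hs, _⟩ => not_isEigenvalue_one_of_hasSimpleSpectrum_addPendant hv hs,
    fun h1 => ⟨?_, ?_, ?_⟩⟩
  · exact .of_isUniversal (isUniversal_addPendant hv)
  · exact hasSimpleSpectrum_lap_addPendant hv hG.2.1 h1
  · exact fun b hb => hG.not_controllable_addPendant hv hb

theorem stmt10 {n : ℕ} (hn : 0 < n) (G : SimpleGraph (Fin n))
    (hG : StronglyUncontrollable G)
    (hdeg : (G.neighborSet ⟨n - 1, by omega⟩).ncard = n - 1) :
    StronglyUncontrollable (addPendant G ⟨n - 1, by omega⟩) ↔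
      ¬ IsEigenvalue (lap G) 1 := by
  exact stmt10_general (isUniversal_of_ncard_neighborSet_eq (by rwa [Nat.card_fin])) hG
end
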